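/- Let 0 < q < 1, let n ≥ 1, and let f be a polynomial in n variables with real coefficients. Then the iterated Jackson q-integral ∫_0^1 ∫_0^{x_n} ⋯ ∫_0^{x_2} f(x_1,…,x_n) d_q x_1 ⋯ d_q x_n equals (1−q)^n ∑_{μ ∈ Par_n} q^{|μ|} f(q^{μ_1},…,q^{μ_n}), where the absolutely convergent sum is over all partitions μ ∈ Par_n. -/

import Mathlib

/-- Jackson `q`-integral `∫_0^b g(x) d_q x = (1-q) ∑_{i≥0} g(b q^i) b q^i`. -/
noncomputable def jackson (q b : ℝ) (g : ℝ → ℝ) : ℝ :=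
  (1 - q) * ∑' i : ℕ, g (b * q ^ i) * (b * q ^ i)

/-- Iterated Jackson `q`-integral
`∫_0^b ∫_0^{x_n} ⋯ ∫_0^{x_2} f(x_1,…,x_n) d_q x_1 ⋯ d_q x_n`. -/
noncomputable def iterJ (q : ℝ) : (n : ℕ) → ℝ → ((Fin n → ℝ) → ℝ) → ℝ
  | 0, _, f => f (fun i => i.elim0)
  | n + 1, b, f => jackson q b (fun t => iterJ q n t (fun x => f (Fin.snoc x t)))

/-- Summand of the partition sum, extended by zero, with all parts at least `m`. -/
noncomputable def auxF (q : ℝ) (n m : ℕ) (f : (Fin n → ℝ) → ℝ) (μ : Fin n → ℕ) : ℝ :=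
  open Classical in
  if Antitone μ ∧ ∀ i, m ≤ μ i then q ^ (∑ i, μ i) * f (fun i => q ^ (μ i)) else 0

theorem aux_summable_pow (q : ℝ) (hq0 : 0 < q) (hq1 : q < 1) (n : ℕ) :
    Summable (fun μ : Fin n → ℕ => q ^ (∑ i, μ i)) := by
  induction n with
  | zero => exact (hasSum_fintype _).summable
  | succ n ih =>
    have h1 : Summable (fun k : ℕ => q ^ k) := summable_geometric_of_lt_one hq0.le hq1
    have h2 := h1.mul_of_nonneg ih (fun k => by positivity) (fun k => by positivity)
    rw [← (Fin.snocEquiv (fun _ : Fin (n + 1) => ℕ)).summable_iff]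
    refine h2.congr ?_
    rintro ⟨k, μ⟩
    simp [Fin.snocEquiv, Fin.sum_univ_castSucc, pow_add, mul_comm]

theorem aux_summable (q : ℝ) (hq0 : 0 < q) (hq1 : q < 1) (n m : ℕ) (f : (Fin n → ℝ) → ℝ)
    (C : ℝ) (hC : ∀ x : Fin n → ℝ, (∀ i, x i ∈ Set.Icc (0 : ℝ) 1) → |f x| ≤ C) :
    Summable (auxF q n m f) := by
  refine Summable.of_norm_bounded ((aux_summable_pow q hq0 hq1 n).mul_right C) ?_
  intro μ
  have hb := hC (fun i => q ^ (μ i)) (fun i => ⟨by positivity, pow_le_one₀ hq0.le hq1.le⟩)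
  have hC0 : 0 ≤ C := (abs_nonneg _).trans hb
  unfold auxF
  split_ifs
  · rw [norm_mul, Real.norm_eq_abs, Real.norm_eq_abs, abs_of_nonneg (by positivity)]
    gcongr
  · simp only [norm_zero]; positivity

theorem aux_antitone (n m k : ℕ) (μ : Fin n → ℕ) :
    (Antitone (Fin.snoc μ k : Fin (n + 1) → ℕ) ∧
      ∀ i, m ≤ (Fin.snoc μ k : Fin (n + 1) → ℕ) i) ↔
      m ≤ k ∧ Antitone μ ∧ ∀ i, k ≤ μ i := by
  constructor
  · rintro ⟨h1, h2⟩
    refine ⟨by simpa using h2 (Fin.last n), fun i j hij => ?_, fun i => ?_⟩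
    · have := h1 (show i.castSucc ≤ j.castSucc from hij)
      simpa using this
    · have := h1 (Fin.le_last i.castSucc)
      simpa using this
  · rintro ⟨h1, h2, h3⟩
    refine ⟨fun i j hij => ?_, fun i => ?_⟩
    · induction j using Fin.lastCases with
      | last =>
        induction i using Fin.lastCases with
        | last => simp
        | cast i => simpa using h3 i
      | cast j =>
        induction i using Fin.lastCases with
        | last => exact absurd hij (not_le.mpr (Fin.castSucc_lt_last j))
        | cast i => simpa using h2 (show i ≤ j from hij)
    · induction i using Fin.lastCases with
      | last => simpa using h1
      | cast i => simpa using h1.trans (h3 i)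

theorem aux_snoc (q : ℝ) (n m k : ℕ) (f : (Fin (n + 1) → ℝ) → ℝ) (μ : Fin n → ℕ) :
    auxF q (n + 1) m f (Fin.snoc μ k : Fin (n + 1) → ℕ) =
      if m ≤ k then auxF q n k (fun x => f (Fin.snoc x (q ^ k))) μ * q ^ k else 0 := by
  unfold auxF
  rw [if_congr (aux_antitone n m k μ) rfl rfl]
  have e : (fun i => q ^ ((Fin.snoc μ k : Fin (n + 1) → ℕ) i)) =
      (Fin.snoc (fun i => q ^ (μ i)) (q ^ k) : Fin (n + 1) → ℝ) := by
    funext i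
    induction i using Fin.lastCases with
    | last => simp
    | cast i => simp
  rw [e]
  by_cases h1 : m ≤ k
  · by_cases h2 : Antitone μ ∧ ∀ i, k ≤ μ i
    · rw [if_pos ⟨h1, h2⟩, if_pos h1, if_pos h2, Fin.sum_univ_castSucc]
      simp only [Fin.snoc_castSucc, Fin.snoc_last, pow_add]
      ring
    · rw [if_neg (fun h => h2 h.2), if_pos h1, if_neg h2, zero_mul]
  · rw [if_neg (fun h => h1 h.1), if_neg h1]

theorem aux_main (q : ℝ) (hq0 : 0 < q) (hq1 : q < 1) (n : ℕ) : ∀ (m : ℕ)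
    (f : (Fin n → ℝ) → ℝ)
    (C : ℝ) (_ : ∀ x : Fin n → ℝ, (∀ i, x i ∈ Set.Icc (0 : ℝ) 1) → |f x| ≤ C),
    iterJ q n (q ^ m) f = (1 - q) ^ n * ∑' μ, auxF q n m f μ := by
  induction n with
  | zero =>
    intro m f C hC
    rw [tsum_fintype]
    simp only [iterJ, auxF, Finset.univ_unique, Finset.sum_singleton, pow_zero, one_mul]
    rw [if_pos ⟨fun i => i.elim0, fun i => i.elim0⟩]
    simp only [Finset.univ_eq_empty, Finset.sum_empty, pow_zero, one_mul]
    congr 1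
    funext i
    exact i.elim0
  | succ n ih =>
    intro m f C hC
    have hC' : ∀ k : ℕ, ∀ x : Fin n → ℝ, (∀ i, x i ∈ Set.Icc (0 : ℝ) 1) →
        |f (Fin.snoc x (q ^ k))| ≤ C := by
      intro k x hx
      apply hC
      intro i
      induction i using Fin.lastCases with
      | last =>
        simp only [Fin.snoc_last]
        exact ⟨by positivity, pow_le_one₀ hq0.le hq1.le⟩
      | cast i => simpa using hx i
    have hs := aux_summable q hq0 hq1 (n + 1) m f C hC
    let E : ℕ × (Fin n → ℕ) ≃ (Fin (n + 1) → ℕ) := Fin.snocEquiv (fun _ : Fin (n + 1) => ℕ)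
    have hs' : Summable (fun p : ℕ × (Fin n → ℕ) => auxF q (n + 1) m f (E p)) :=
      hs.comp_injective E.injective
    have e1 : ∑' μ, auxF q (n + 1) m f μ =
        ∑' k : ℕ, if m ≤ k then
          (∑' μ, auxF q n k (fun x => f (Fin.snoc x (q ^ k))) μ) * q ^ k else 0 := by
      rw [← E.tsum_eq, hs'.tsum_prod]
      refine tsum_congr fun k => ?_
      have : ∀ μ : Fin n → ℕ, auxF q (n + 1) m f (E (k, μ)) = _ :=
        fun μ => aux_snoc q n m k f μ
      rw [tsum_congr this]
      split_ifs
      · rw [tsum_mul_right]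
      · exact tsum_zero
    have e2 : ∑' k : ℕ, (if m ≤ k then
          (∑' μ, auxF q n k (fun x => f (Fin.snoc x (q ^ k))) μ) * q ^ k else 0) =
        ∑' i : ℕ, (∑' μ, auxF q n (m + i) (fun x => f (Fin.snoc x (q ^ (m + i)))) μ)
          * q ^ (m + i) := by
      rw [← (add_right_injective m).tsum_eq]
      · refine tsum_congr fun i => ?_
        rw [if_pos (Nat.le_add_right m i)]
      · intro k hk
        by_cases h : m ≤ k
        · exact ⟨k - m, by simp only []; omega⟩
        · exact absurd (if_neg h) hk
    rw [e1, e2]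
    simp only [iterJ, jackson]
    rw [pow_succ', mul_assoc, ← tsum_mul_left (a := (1 - q) ^ n)]
    congr 1
    refine tsum_congr fun i => ?_
    rw [← pow_add, ih (m + i) _ C (hC' (m + i)), mul_assoc]

theorem stmt3 (q : ℝ) (hq0 : 0 < q) (hq1 : q < 1) (n : ℕ) (hn : 1 ≤ n)
    (f : MvPolynomial (Fin n) ℝ) :
    iterJ q n 1 (fun x => MvPolynomial.eval x f)
      = (1 - q) ^ n *
          ∑' μ : {μ : Fin n → ℕ // Antitone μ},
            q ^ (∑ i, μ.1 i) * MvPolynomial.eval (fun i => q ^ (μ.1 i)) f := by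
  have hK : IsCompact (Set.pi Set.univ (fun _ : Fin n => Set.Icc (0 : ℝ) 1)) :=
    isCompact_univ_pi fun _ => isCompact_Icc
  obtain ⟨C, hC⟩ := hK.exists_bound_of_continuousOn (f := fun x => MvPolynomial.eval x f)
    (MvPolynomial.continuous_eval f).continuousOn
  have h := aux_main q hq0 hq1 n 0 (fun x => MvPolynomial.eval x f) C
    (fun x hx => hC x (fun i _ => hx i))
  rw [pow_zero] at h
  rw [h]
  congr 1
  have := tsum_subtype {μ : Fin n → ℕ | Antitone μ}
    (fun μ => q ^ (∑ i, μ i) * MvPolynomial.eval (fun i => q ^ (μ i)) f)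
  refine Eq.trans (tsum_congr fun μ => ?_) this.symm
  unfold auxF
  by_cases hμ : Antitone μ
  · rw [if_pos ⟨hμ, fun i => Nat.zero_le _⟩, Set.indicator_of_mem (by exact hμ)]
  · rw [if_neg (fun h => hμ h.1), Set.indicator_of_notMem (by exact hμ)]
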